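/- arXiv:1805.06134 — 5 statements merged into one kernel-verified Lean document; each statement's English description precedes it below -/
import Mathlib

section
/- Let R be a commutative ring, let u, c ∈ R, and let d : ℕ → R satisfy d(0) = 1 and the recurrence d(δ+1) = d(1)·d(δ) − u·d(δ−1) for all δ ≥ 1. Define D(0) = 1 and D(δ) = d(δ) − c·d(δ−1) for δ ≥ 1. Then for all integers δ, γ ≥ 0, with m = min(δ,γ): D(δ)·D(γ) = Σ_{i=0}^{m} u^i · D(δ+γ−2i) − c·Σ_{i=0}^{m−1} u^i · D(δ+γ−1−2i). -/
/-- With `d` as in Statement 0 and `D δ = d δ - c * d (δ-1)` (`D 0 = 1`),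
one has, with `m = min δ γ`,
`D δ * D γ = ∑_{i=0}^{m} u^i * D (δ+γ-2i) - c * ∑_{i=0}^{m-1} u^i * D (δ+γ-1-2i)`. -/
theorem statement2 {R : Type*} [CommRing R] (u c : R) (d D : ℕ → R)
    (h0 : d 0 = 1)
    (hrec : ∀ δ : ℕ, 1 ≤ δ → d (δ + 1) = d 1 * d δ - u * d (δ - 1))
    (hD0 : D 0 = 1)
    (hD : ∀ δ : ℕ, 1 ≤ δ → D δ = d δ - c * d (δ - 1)) :
    ∀ δ γ : ℕ, D δ * D γ =
      ∑ i ∈ Finset.range (min δ γ + 1), u ^ i * D (δ + γ - 2 * i)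
        - c * ∑ i ∈ Finset.range (min δ γ), u ^ i * D (δ + γ - 1 - 2 * i) := by
  have hd2 : ∀ n, d (n + 2) = d 1 * d (n + 1) - u * d n := fun n => by
    simpa using hrec (n + 1) (by omega)
  have hDs : ∀ n, D (n + 1) = d (n + 1) - c * d n := fun n => by
    simpa using hD (n + 1) (by omega)
  have hD2 : ∀ n, D (n + 2) = d 1 * D (n + 1) - u * D n := by
    intro n
    rcases n with _ | n
    · have h1 := hDs 0
      have h2 := hDs 1
      have h3 := hd2 0
      simp only [zero_add, Nat.reduceAdd] at *
      rw [h2, h3, h1, hD0, h0]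
      ring
    · rw [hDs (n + 2), hDs (n + 1), hDs n, hd2 (n + 1), hd2 n]
      ring
  -- addition formula
  have hadd : ∀ g m, D (m + g + 2) = D (m + 1) * d (g + 1) - u * (D m * d g) := by
    intro g
    induction g with
    | zero =>
      intro m
      rw [add_zero, zero_add, hD2, h0]
      ring
    | succ g ih =>
      intro m
      have h := ih (m + 1)
      rw [show m + (g + 1) + 2 = m + 1 + g + 2 by ring, h, hD2 m, hd2 g]
      ring
  have hsum : ∀ k g, D (k + g) * d g =
      ∑ i ∈ Finset.range (g + 1), u ^ i * D (k + g + g - 2 * i) := by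
    intro k g
    induction g with
    | zero => simp [h0]
    | succ g ih =>
      rw [Finset.sum_range_succ']
      have e : ∑ i ∈ Finset.range (g + 1),
          u ^ (i + 1) * D (k + (g + 1) + (g + 1) - 2 * (i + 1)) =
          u * ∑ i ∈ Finset.range (g + 1), u ^ i * D (k + g + g - 2 * i) := by
        rw [Finset.mul_sum]
        refine Finset.sum_congr rfl fun i _ => ?_
        rw [show k + (g + 1) + (g + 1) - 2 * (i + 1) = k + g + g - 2 * i by omega]
        ring
      rw [e, ← ih]
      have h := hadd g (k + g)
      rw [show k + (g + 1) + (g + 1) - 2 * 0 = k + g + g + 2 by omega, h]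
      rw [← add_assoc k g 1]
      ring
  have main : ∀ k g, D (k + g) * D g =
      ∑ i ∈ Finset.range (g + 1), u ^ i * D (k + g + g - 2 * i)
        - c * ∑ i ∈ Finset.range g, u ^ i * D (k + g + g - 1 - 2 * i) := by
    intro k g
    rw [← hsum]
    rcases g with _ | g
    · simp [hD0, h0]
    · have h := hsum (k + 1) g
      rw [show k + (g + 1) + (g + 1) - 1 = k + 1 + g + g by omega, ← h, hDs g,
        show k + 1 + g = k + (g + 1) by ring]
      ring
  intro δ γ
  rcases le_total γ δ with h | h
  · obtain ⟨k, rfl⟩ := Nat.exists_eq_add_of_le' h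
    rw [min_eq_right h]
    exact main k γ
  · obtain ⟨k, rfl⟩ := Nat.exists_eq_add_of_le' h
    rw [min_eq_left h, mul_comm, add_comm δ (k + δ)]
    exact main k δ
end

section
/- Let R be a commutative ring. Let V, W : ℤ_{>0} → R be completely multiplicative (f(1) = 1 and f(ab) = f(a)f(b) for all a, b), let E : ℤ_{>0} → R be multiplicative (E(1) = 1 and E(ab) = E(a)E(b) whenever gcd(a,b) = 1) with E(p^{δ+1}) = E(p)E(p^δ) − V(p)E(p^{δ−1}) for every prime p and every δ ≥ 1, and let F : ℤ_{>0} → R be the multiplicative function with F(p^δ) = E(p^δ) − W(p)·E(p^{δ−1}) for every prime p and δ ≥ 1. Then for all positive integers N, M: F(N)·F(M) = Σ_{d | gcd(N,M)} Σ_{d₁ | gcd(N,M)/d} μ(d₁)·V(d)·W(d₁)·F(NM/(d²d₁)), where μ is the Möbius function. -/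
namespace Aux3
open Finset

theorem pp_sum {R : Type*} [CommRing R] (v w : R) (e f : ℕ → R)
    (he0 : e 0 = 1) (hf0 : f 0 = 1)
    (her : ∀ n, e (n+2) = e 1 * e (n+1) - v * e n)
    (hf : ∀ n, f (n+1) = e (n+1) - w * e n) :
    (∀ n, e 1 * f (n+1) = f (n+2) + v * f n) ∧
    ∀ b c, f (b + c) * e b = ∑ i ∈ range (b+1), v^i * f (c + 2*(b-i)) := by
  have h1 : ∀ n, e 1 * f (n+1) = f (n+2) + v * f n := by
    rintro (_|n)
    · have := her 0
      rw [hf 1, hf 0, hf0, this]; simp [he0]; ring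
    · rw [hf, hf (n+2), hf n, her (n+1), her n]; ring
  refine ⟨h1, ?_⟩
  have hS : ∀ b c, ∑ i ∈ range (b+1+1), v^i * f (c + 2*(b+1-i)) =
      f (c+2*b+2) + v * ∑ i ∈ range (b+1), v^i * f (c + 2*(b-i)) := by
    intro b c
    rw [sum_range_succ', mul_sum, add_comm]
    congr 1
    · simp; ring_nf
    · refine sum_congr rfl fun i hi => ?_
      rw [Nat.add_sub_add_right]; ring
  have key : ∀ b c, e 1 * ∑ i ∈ range (b+1), v^i * f (c + 1 + 2*(b-i)) =
      ∑ i ∈ range (b+1), v^i * f (c + 2 + 2*(b-i)) +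
      v * ∑ i ∈ range (b+1), v^i * f (c + 2*(b-i)) := by
    intro b c
    rw [mul_sum, mul_sum, ← sum_add_distrib]
    refine sum_congr rfl fun i hi => ?_
    have := h1 (c + 2*(b-i))
    rw [show c + 1 + 2*(b-i) = c + 2*(b-i) + 1 by ring,
      show c + 2 + 2*(b-i) = c + 2*(b-i) + 2 by ring]
    linear_combination v^i * this
  intro b
  induction b using Nat.strong_induction_on with
  | _ b ih =>
    intro c
    match b, ih with
    | 0, _ => simp [he0]
    | 1, _ =>
      have := h1 c
      rw [sum_range_succ, sum_range_one]
      simp only [Nat.sub_zero, Nat.sub_self]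
      rw [add_comm 1 c, mul_comm, this]; simp
    | b+2, ih =>
      have i1 := ih (b+1) (by omega) (c+1)
      have i0 := ih b (by omega) (c+2)
      rw [show b + 1 + (c+1) = b + 2 + c by ring] at i1
      rw [show b + (c+2) = b + 2 + c by ring] at i0
      have k := key (b+1) c
      rw [hS b (c+2)] at k
      rw [hS (b+1) c, her]
      rw [show c + 2 * (b+1) + 2 = c + 2 + 2 * b + 2 by ring]
      linear_combination e 1 * i1 - v * i0 + k

theorem sum_div_mul {R : Type*} [CommRing R] {m n : ℕ} (h : m.Coprime n) (hm : 0 < m)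
    (hn : 0 < n) (G : ℕ → R) :
    ∑ d ∈ (m*n).divisors, G d = ∑ d ∈ m.divisors, ∑ d' ∈ n.divisors, G (d*d') := by
  rw [← Finset.sum_product']
  symm
  refine sum_nbij' (fun x => x.1 * x.2) (fun d => (d.gcd m, d.gcd n)) ?_ ?_ ?_ ?_ ?_
  · rintro ⟨x, y⟩ hx
    simp only [mem_product, Nat.mem_divisors] at hx ⊢
    exact ⟨mul_dvd_mul hx.1.1 hx.2.1, by positivity⟩
  · intro d hd
    simp only [mem_product, Nat.mem_divisors]
    exact ⟨⟨Nat.gcd_dvd_right _ _, hm.ne'⟩, ⟨Nat.gcd_dvd_right _ _, hn.ne'⟩⟩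
  · rintro ⟨x, y⟩ hx
    simp only [mem_product, Nat.mem_divisors] at hx
    obtain ⟨⟨hx, -⟩, ⟨hy, -⟩⟩ := hx
    have h1 : Nat.Coprime y m := (h.coprime_dvd_right hy).symm
    have h2 : Nat.Coprime x n := h.coprime_dvd_left hx
    ext
    · simp only [h1.gcd_mul_right_cancel]
      exact Nat.gcd_eq_left hx
    · simp only [h2.gcd_mul_left_cancel]
      exact Nat.gcd_eq_left hy
  · intro d hd
    simp only [← Nat.Coprime.gcd_mul d h]
    exact Nat.gcd_eq_left (Nat.dvd_of_mem_divisors hd)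
  · intros; rfl

theorem moebius_pp {R : Type*} [CommRing R] {p : ℕ} (hp : p.Prime) (n : ℕ) (G : ℕ → R) :
    ∑ j ∈ range (n+1), ((ArithmeticFunction.moebius (p^j) : ℤ) : R) * G j =
      G 0 - if n = 0 then 0 else G 1 := by
  rcases n with _ | n
  · simp
  · rw [sum_range_succ', sum_range_succ', sum_eq_zero]
    · simp [ArithmeticFunction.moebius_apply_prime hp]; ring
    · intro i _
      rw [ArithmeticFunction.moebius_apply_prime_pow hp (by omega), if_neg (by omega)]
      simp

/-- The right-hand side. -/
def rhsH {R : Type*} [CommRing R] (V W F : ℕ → R) (N M : ℕ) : R :=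
  ∑ d ∈ (Nat.gcd N M).divisors, ∑ d₁ ∈ (Nat.gcd N M / d).divisors,
        ((ArithmeticFunction.moebius d₁ : ℤ) : R) * V d * W d₁
          * F (N * M / (d ^ 2 * d₁))

theorem rhsH_comm {R : Type*} [CommRing R] (V W F : ℕ → R) (N M : ℕ) :
    rhsH V W F N M = rhsH V W F M N := by
  unfold rhsH
  rw [Nat.gcd_comm N M, mul_comm N M]

theorem dvd_aux {N M d d₁ : ℕ} (hg : 0 < Nat.gcd N M) (hd : d ∣ Nat.gcd N M)
    (hd₁ : d₁ ∣ Nat.gcd N M / d) : d ^ 2 * d₁ ∣ N * M := by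
  have h1 : d * d₁ ∣ Nat.gcd N M := by
    rw [← Nat.mul_div_cancel' hd]
    exact mul_dvd_mul_left d hd₁
  rw [pow_two, mul_assoc]
  exact mul_dvd_mul (hd.trans (Nat.gcd_dvd_left _ _)) (h1.trans (Nat.gcd_dvd_right _ _))

theorem rhsH_mul {R : Type*} [CommRing R] (V W F : ℕ → R)
    (hVmul : ∀ a b : ℕ, 0 < a → 0 < b → V (a * b) = V a * V b)
    (hWmul : ∀ a b : ℕ, 0 < a → 0 < b → W (a * b) = W a * W b)
    (hFmul : ∀ a b : ℕ, 0 < a → 0 < b → Nat.Coprime a b → F (a * b) = F a * F b)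
    (N M N' M' : ℕ) (hN : 0 < N) (hM : 0 < M) (hN' : 0 < N') (hM' : 0 < M')
    (hc : Nat.Coprime (N * M) (N' * M')) :
    rhsH V W F (N * N') (M * M') = rhsH V W F N M * rhsH V W F N' M' := by
  have hNN : N.Coprime N' := hc.coprime_mul_right.coprime_mul_right_right
  have hNM : N.Coprime M' := hc.coprime_mul_right.coprime_mul_left_right
  have hMN : M.Coprime N' := hc.coprime_mul_left.coprime_mul_right_right
  have hMM : M.Coprime M' := hc.coprime_mul_left.coprime_mul_left_right
  have hg : Nat.gcd (N * N') (M * M') = Nat.gcd N M * Nat.gcd N' M' := by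
    rw [hMM.gcd_mul, hMN.symm.gcd_mul_right_cancel, hNM.gcd_mul_left_cancel]
  have hg0 : 0 < Nat.gcd N M := Nat.gcd_pos_of_pos_left _ hN
  have hg0' : 0 < Nat.gcd N' M' := Nat.gcd_pos_of_pos_left _ hN'
  have hgc : Nat.Coprime (Nat.gcd N M) (Nat.gcd N' M') :=
    (hNN.coprime_dvd_left (Nat.gcd_dvd_left _ _)).coprime_dvd_right (Nat.gcd_dvd_left _ _)
  unfold rhsH
  rw [hg, sum_div_mul hgc hg0 hg0', sum_mul_sum]
  refine sum_congr rfl fun d hd => sum_congr rfl fun d' hd' => ?_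
  replace hd := Nat.dvd_of_mem_divisors hd
  replace hd' := Nat.dvd_of_mem_divisors hd'
  have hd0 := Nat.pos_of_dvd_of_pos hd hg0
  have hd0' := Nat.pos_of_dvd_of_pos hd' hg0'
  rw [Nat.mul_div_mul_comm hd hd', sum_div_mul
    ((hgc.coprime_dvd_left (Nat.div_dvd_of_dvd hd)).coprime_dvd_right (Nat.div_dvd_of_dvd hd'))
    (Nat.div_pos (Nat.le_of_dvd hg0 hd) hd0) (Nat.div_pos (Nat.le_of_dvd hg0' hd') hd0'),
    sum_mul_sum]
  refine sum_congr rfl fun c hc1 => sum_congr rfl fun c' hc1' => ?_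
  replace hc1 := Nat.dvd_of_mem_divisors hc1
  replace hc1' := Nat.dvd_of_mem_divisors hc1'
  have hcg : c ∣ Nat.gcd N M := hc1.trans (Nat.div_dvd_of_dvd hd)
  have hcg' : c' ∣ Nat.gcd N' M' := hc1'.trans (Nat.div_dvd_of_dvd hd')
  have hc0 := Nat.pos_of_dvd_of_pos hcg hg0
  have hc0' := Nat.pos_of_dvd_of_pos hcg' hg0'
  have hcc : c.Coprime c' := (hgc.coprime_dvd_left hcg).coprime_dvd_right hcg'
  have k := dvd_aux hg0 hd hc1
  have k' := dvd_aux hg0' hd' hc1'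
  have hmu := ArithmeticFunction.isMultiplicative_moebius.map_mul_of_coprime hcc
  rw [hmu, hVmul _ _ hd0 hd0', hWmul _ _ hc0 hc0',
    show N * N' * (M * M') = (N * M) * (N' * M') by ring,
    show (d * d')^2 * (c * c') = (d^2 * c) * (d'^2 * c') by ring,
    Nat.mul_div_mul_comm k k', hFmul]
  · push_cast; ring
  · exact Nat.div_pos (Nat.le_of_dvd (by positivity) k) (by positivity)
  · exact Nat.div_pos (Nat.le_of_dvd (by positivity) k') (by positivity)
  · exact (hc.coprime_dvd_left (Nat.div_dvd_of_dvd k)).coprime_dvd_right (Nat.div_dvd_of_dvd k')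

theorem cm_pow {R : Type*} [CommRing R] (V : ℕ → R) (hV1 : V 1 = 1)
    (hVmul : ∀ a b : ℕ, 0 < a → 0 < b → V (a * b) = V a * V b) (p : ℕ) (hp : 0 < p) (i : ℕ) :
    V (p^i) = V p ^ i := by
  induction i with
  | zero => simp [hV1]
  | succ i ih => rw [pow_succ, hVmul _ _ (by positivity) hp, ih, pow_succ]

theorem rhsH_pp {R : Type*} [CommRing R] (V W F : ℕ → R)
    (hV1 : V 1 = 1)
    (hVmul : ∀ a b : ℕ, 0 < a → 0 < b → V (a * b) = V a * V b)
    (hW1 : W 1 = 1) (p : ℕ) (hp : p.Prime) (b c : ℕ) :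
    rhsH V W F (p^(b+c)) (p^b) = ∑ i ∈ range (b+1), V p ^ i * F (p ^ (c + 2*(b-i)))
      - W p * ∑ i ∈ range b, V p ^ i * F (p ^ (c + 1 + 2*(b-1-i))) := by
  unfold rhsH
  rw [Nat.gcd_eq_right (pow_dvd_pow p (Nat.le_add_right b c)), Nat.sum_divisors_prime_pow hp]
  have : ∀ i ∈ range (b+1), ∑ d₁ ∈ (p^b / p^i).divisors,
        ((ArithmeticFunction.moebius d₁ : ℤ) : R) * V (p^i) * W d₁
          * F (p^(b+c) * p^b / ((p^i) ^ 2 * d₁)) = V p ^ i * F (p ^ (c + 2*(b-i)))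
          - if i < b then W p * (V p ^ i * F (p ^ (c + 1 + 2*(b-1-i)))) else 0 := by
    intro i hi
    have hib : i ≤ b := by simpa [Nat.lt_succ_iff] using hi
    rw [Nat.pow_div hib hp.pos, Nat.sum_divisors_prime_pow hp]
    simp only [mul_assoc]
    rw [moebius_pp hp (b-i) (fun j => V (p^i) * (W (p^j) * F (p^(b+c) * p^b / ((p^i) ^ 2 * p^j))))]
    simp only [cm_pow V hV1 hVmul p hp.pos, ← pow_add, ← pow_mul]
    congr 1
    · rw [Nat.pow_div (by omega) hp.pos, pow_zero, hW1, one_mul]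
      congr 3; omega
    · by_cases h : i < b
      · rw [if_neg (by omega), if_pos h, Nat.pow_div (by omega) hp.pos, pow_one,
          show b + c + b - (i * 2 + 1) = c + 1 + 2*(b-1-i) by omega]
        ring
      · rw [if_pos (by omega), if_neg h]
  rw [sum_congr rfl this, sum_sub_distrib, sum_range_succ (fun i => ite _ _ _), mul_sum]
  congr 1
  rw [if_neg (lt_irrefl _), add_zero]
  exact sum_congr rfl fun i hi => if_pos (mem_range.1 hi)

end Aux3

open Aux3

/-- With `V`, `W` completely multiplicative, `E` multiplicative satisfying a
Hecke-type recurrence, and `F` the multiplicative function with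
`F (p^δ) = E (p^δ) - W p * E (p^(δ-1))`, one has
`F N * F M = ∑_{d | (N,M)} ∑_{d₁ | (N,M)/d} μ(d₁) V(d) W(d₁) F(N*M/(d²d₁))`. -/
theorem statement3 {R : Type*} [CommRing R] (V W E F : ℕ → R)
    (hV1 : V 1 = 1)
    (hVmul : ∀ a b : ℕ, 0 < a → 0 < b → V (a * b) = V a * V b)
    (hW1 : W 1 = 1)
    (hWmul : ∀ a b : ℕ, 0 < a → 0 < b → W (a * b) = W a * W b)
    (hE1 : E 1 = 1)
    (hEmul : ∀ a b : ℕ, 0 < a → 0 < b → Nat.Coprime a b → E (a * b) = E a * E b)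
    (hErec : ∀ p : ℕ, p.Prime → ∀ δ : ℕ, 1 ≤ δ →
      E (p ^ (δ + 1)) = E p * E (p ^ δ) - V p * E (p ^ (δ - 1)))
    (hF1 : F 1 = 1)
    (hFmul : ∀ a b : ℕ, 0 < a → 0 < b → Nat.Coprime a b → F (a * b) = F a * F b)
    (hFp : ∀ p : ℕ, p.Prime → ∀ δ : ℕ, 1 ≤ δ →
      F (p ^ δ) = E (p ^ δ) - W p * E (p ^ (δ - 1))) :
    ∀ N M : ℕ, 0 < N → 0 < M →
      F N * F M = ∑ d ∈ (Nat.gcd N M).divisors, ∑ d₁ ∈ (Nat.gcd N M / d).divisors,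
        ((ArithmeticFunction.moebius d₁ : ℤ) : R) * V d * W d₁
          * F (N * M / (d ^ 2 * d₁)) := by
  have hpp0 : ∀ p : ℕ, p.Prime → ∀ b c : ℕ,
      F (p^(b+c)) * F (p^b) = rhsH V W F (p^(b+c)) (p^b) := by
    intro p hp b c
    rw [rhsH_pp V W F hV1 hVmul hW1 p hp]
    obtain ⟨-, h⟩ := pp_sum (V p) (W p) (fun n => E (p^n)) (fun n => F (p^n))
      (by simp [hE1]) (by simp [hF1])
      (fun n => by simpa using hErec p hp (n+1) (by omega))
      (fun n => by simpa using hFp p hp (n+1) (by omega))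
    rcases b with _ | b
    · simp [hF1]
    · have h1 := h (b+1) c
      have h2 := h b (c+1)
      have h3 := hFp p hp (b+1) (by omega)
      rw [show b + (c+1) = b + 1 + c by ring] at h2
      simp only [Nat.add_sub_cancel] at h3 ⊢
      rw [h3]
      linear_combination h1 - W p * h2
  have hpp : ∀ p : ℕ, p.Prime → ∀ a b : ℕ,
      F (p^a) * F (p^b) = rhsH V W F (p^a) (p^b) := by
    intro p hp a b
    rcases le_total b a with hab | hab
    · obtain ⟨c, rfl⟩ := Nat.exists_eq_add_of_le hab
      exact hpp0 p hp b c
    · obtain ⟨c, rfl⟩ := Nat.exists_eq_add_of_le hab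
      rw [rhsH_comm, mul_comm]
      exact hpp0 p hp a c
  have main : ∀ K N M : ℕ, 0 < N → 0 < M → N * M = K → F N * F M = rhsH V W F N M := by
    intro K
    induction K using Nat.strong_induction_on with
    | _ K ih =>
      intro N M hN hM hK
      by_cases h1 : K = 1
      · rw [h1] at hK
        obtain rfl : N = 1 := Nat.eq_one_of_mul_eq_one_right hK
        obtain rfl : M = 1 := by simpa using hK
        simpa using hpp 2 Nat.prime_two 0 0
      · obtain ⟨p, hp, hpK⟩ := Nat.exists_prime_and_dvd h1
        obtain ⟨a, N', hpN, rfl⟩ := Nat.exists_eq_pow_mul_and_not_dvd hN.ne' p hp.ne_one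
        obtain ⟨b, M', hpM, rfl⟩ := Nat.exists_eq_pow_mul_and_not_dvd hM.ne' p hp.ne_one
        have hN' : 0 < N' := Nat.pos_of_mul_pos_left hN
        have hM' : 0 < M' := Nat.pos_of_mul_pos_left hM
        have hpos : ∀ i, 0 < p ^ i := fun i => pow_pos hp.pos i
        have cN : Nat.Coprime p N' := (Nat.Prime.coprime_iff_not_dvd hp).2 hpN
        have cM : Nat.Coprime p M' := (Nat.Prime.coprime_iff_not_dvd hp).2 hpM
        have hK0 : 0 < K := by rw [← hK]; positivity
        have hdvd : N' * M' ∣ K := by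
          rw [← hK]; exact mul_dvd_mul (Dvd.intro_left _ rfl) (Dvd.intro_left _ rfl)
        have hlt : N' * M' < K := by
          refine lt_of_le_of_ne (Nat.le_of_dvd hK0 hdvd) fun he => ?_
          rw [← he] at hpK
          exact ((Nat.Prime.dvd_mul hp).1 hpK).elim hpN hpM
        have i1 := ih _ hlt N' M' hN' hM' rfl
        rw [rhsH_mul V W F hVmul hWmul hFmul _ _ _ _ (hpos a) (hpos b) hN' hM'
          (by rw [← pow_add]; exact (cN.mul_right cM).pow_left _), ← i1, ← hpp p hp,
          hFmul _ _ (hpos a) hN' (cN.pow_left _), hFmul _ _ (hpos b) hM' (cM.pow_left _)]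
        ring
  intro N M hN hM
  exact main _ N M hN hM rfl
end

section
/- Let R be a commutative ring and M an R-module. For each prime p let a_p, b_p, c_p ∈ R. Let x : ℤ_{>0} → M satisfy, for every prime p and every N ≥ 1: x(pN) = a_p·x(N) − c_p·x(N) if p ∤ N, and x(pN) = a_p·x(N) − b_p·x(N/p) if p | N. For each prime p define d_p : ℕ → R by d_p(0) = 1, d_p(1) = a_p, d_p(δ+1) = a_p·d_p(δ) − b_p·d_p(δ−1), set D_p(0) = 1 and D_p(δ) = d_p(δ) − c_p·d_p(δ−1) for δ ≥ 1, and define D(N) := Π_p D_p(ord_p N), where ord_p N is the exponent of p in N. Then x(N) = D(N)·x(1) for every N ≥ 1. -/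
/-- The Hecke-type polynomial sequence: `dSeq a b 0 = 1`, `dSeq a b 1 = a`,
`dSeq a b (δ+1) = a * dSeq a b δ - b * dSeq a b (δ-1)`. -/
def dSeq {R : Type*} [CommRing R] (a b : R) : ℕ → R
  | 0 => 1
  | 1 => a
  | (n + 2) => a * dSeq a b (n + 1) - b * dSeq a b n

/-- `DSeq a b c 0 = 1` and `DSeq a b c δ = dSeq a b δ - c * dSeq a b (δ-1)` for `δ ≥ 1`. -/
def DSeq {R : Type*} [CommRing R] (a b c : R) : ℕ → R
  | 0 => 1
  | (n + 1) => dSeq a b (n + 1) - c * dSeq a b n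

/-- If `x : ℤ_{>0} → M` satisfies, at every prime `p` and every `N ≥ 1`,
`x (p*N) = a_p • x N - c_p • x N` when `p ∤ N`, and
`x (p*N) = a_p • x N - b_p • x (N/p)` when `p ∣ N`, then
`x N = (∏_p D_p (ord_p N)) • x 1` where `D_p = DSeq (a p) (b p) (c p)`. -/
theorem statement5 {R : Type*} [CommRing R] {M : Type*} [AddCommGroup M] [Module R M]
    (a b c : ℕ → R) (x : ℕ → M)
    (hx : ∀ p : ℕ, p.Prime → ∀ N : ℕ, 1 ≤ N →
      (¬ p ∣ N → x (p * N) = a p • x N - c p • x N) ∧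
      (p ∣ N → x (p * N) = a p • x N - b p • x (N / p))) :
    ∀ N : ℕ, 1 ≤ N →
      x N = (∏ p ∈ N.primeFactors,
        DSeq (a p) (b p) (c p) (N.factorization p)) • x 1 := by
  have key : ∀ p : ℕ, p.Prime → ∀ N : ℕ, 1 ≤ N → ¬ p ∣ N → ∀ k : ℕ,
      x (p ^ k * N) = DSeq (a p) (b p) (c p) k • x N ∧
      x (p ^ (k + 1) * N) = DSeq (a p) (b p) (c p) (k + 1) • x N := by
    intro p hp N hN hpN k
    induction k with
    | zero =>
      refine ⟨by simp [DSeq], ?_⟩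
      simp [DSeq, dSeq, (hx p hp N hN).1 hpN, sub_smul]
    | succ k ih =>
      refine ⟨ih.2, ?_⟩
      have hpos : 1 ≤ p ^ (k + 1) * N := Nat.mul_pos (pow_pos hp.pos _) hN
      have e : p ^ (k + 1) * N = p * (p ^ k * N) := by ring
      have h := (hx p hp _ hpos).2 (e ▸ Dvd.intro _ rfl)
      have e2 : p ^ (k + 1) * N / p = p ^ k * N := by
        rw [e, Nat.mul_div_cancel_left _ hp.pos]
      have e3 : p ^ (k + 1 + 1) * N = p * (p ^ (k + 1) * N) := by ring
      rw [e3, h, e2, ih.1, ih.2, smul_smul, smul_smul, ← sub_smul]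
      cases k with
      | zero =>
        congr 1
        simp only [DSeq, dSeq]
        ring
      | succ k =>
        congr 1
        simp only [DSeq, dSeq]
        ring
  intro N
  induction N using Nat.recOnPrimePow with
  | zero => intro h; omega
  | one => intro _; simp
  | prime_pow_mul N p n hp hpN hn ih =>
    intro _
    have hN0 : N ≠ 0 := by rintro rfl; simp at hpN
    have hN : 1 ≤ N := Nat.one_le_iff_ne_zero.mpr hN0
    have hcop : Nat.Coprime (p ^ n) N :=
      Nat.Coprime.pow_left _ ((Nat.Prime.coprime_iff_not_dvd hp).2 hpN)
    have hnot : p ∉ N.primeFactors := fun h => hpN (Nat.dvd_of_mem_primeFactors h)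
    rw [(key p hp N hN hpN n).1, ih hN, smul_smul, hcop.primeFactors_mul,
      Nat.primeFactors_prime_pow hn.ne' hp, ← Finset.insert_eq, Finset.prod_insert hnot]
    have hpn : p ^ n ≠ 0 := pow_ne_zero _ hp.ne_zero
    congr 2
    · simp [Nat.factorization_mul hpn hN0, hp.factorization_pow,
        Nat.factorization_eq_zero_of_not_dvd hpN]
    · refine Finset.prod_congr rfl fun q hq => ?_
      have hqp : p ≠ q := fun h => hnot (h ▸ hq)
      simp [Nat.factorization_mul hpn hN0, hp.factorization_pow, hqp]
end

section
/- Let k ≥ 2 be an integer and let χ : ℤ_{>0} → ℂ be completely multiplicative (χ(1) = 1 and χ(ab) = χ(a)χ(b) for all a, b). For f ≥ 1 define h(f) := Σ_{d|f} μ(d)·χ(d)·d^{k−2}·σ_{2k−3}(f/d) and g(f) := Σ_{e|f} μ(e)·h(f/e), where μ is the Möbius function and σ_{2k−3}(t) = Σ_{d|t} d^{2k−3}. Then for every prime p and every f ≥ 1: g(pf) = p^{2k−3}·g(f) if p | f, and g(pf) = (p^{2k−3} − χ(p)·p^{k−2})·g(f) if p ∤ f. -/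
/-- with `h f = ∑_{d|f} μ(d) χ(d) d^(k-2) σ_{2k-3}(f/d)` and
`g f = ∑_{e|f} μ(e) h(f/e)`, one has `g (p*f) = p^(2k-3) g f` if `p ∣ f` and
`g (p*f) = (p^(2k-3) - χ(p) p^(k-2)) g f` if `p ∤ f`. -/
theorem statement7 (k : ℕ) (hk : 2 ≤ k) (χ : ℕ → ℂ)
    (hχ1 : χ 1 = 1)
    (hχmul : ∀ a b : ℕ, 0 < a → 0 < b → χ (a * b) = χ a * χ b)
    (h g : ℕ → ℂ)
    (hh : ∀ f : ℕ, 1 ≤ f → h f = ∑ d ∈ f.divisors,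
      ((ArithmeticFunction.moebius d : ℤ) : ℂ) * χ d * (d : ℂ) ^ (k - 2)
        * ∑ e ∈ (f / d).divisors, (e : ℂ) ^ (2 * k - 3))
    (hg : ∀ f : ℕ, 1 ≤ f → g f = ∑ e ∈ f.divisors,
      ((ArithmeticFunction.moebius e : ℤ) : ℂ) * h (f / e)) :
    ∀ p : ℕ, p.Prime → ∀ f : ℕ, 1 ≤ f →
      (p ∣ f → g (p * f) = (p : ℂ) ^ (2 * k - 3) * g f) ∧
      (¬ p ∣ f → g (p * f) = ((p : ℂ) ^ (2 * k - 3) - χ p * (p : ℂ) ^ (k - 2)) * g f) := by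
  let a : ArithmeticFunction ℂ := ⟨fun d => if d = 0 then 0 else
    ((ArithmeticFunction.moebius d : ℤ) : ℂ) * χ d * (d : ℂ) ^ (k - 2), by simp⟩
  let w : ArithmeticFunction ℂ := ⟨fun d => if d = 0 then 0 else (d : ℂ) ^ (2 * k - 3), by simp⟩
  let z : ArithmeticFunction ℂ := ((ArithmeticFunction.zeta : ArithmeticFunction ℕ) : ArithmeticFunction ℂ)
  let m : ArithmeticFunction ℂ := ((ArithmeticFunction.moebius : ArithmeticFunction ℤ) : ArithmeticFunction ℂ)
  have ha : ∀ d : ℕ, d ≠ 0 → a d =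
      ((ArithmeticFunction.moebius d : ℤ) : ℂ) * χ d * (d : ℂ) ^ (k - 2) := by
    intro d hd
    simp [a, hd]
  have hw : ∀ d : ℕ, d ≠ 0 → w d = (d : ℂ) ^ (2 * k - 3) := by
    intro d hd
    simp [w, hd]
  have hH : ∀ f : ℕ, 1 ≤ f → h f = (a * (z * w)) f := by
    intro f hf
    rw [hh f hf, ArithmeticFunction.mul_apply,
      Nat.sum_divisorsAntidiagonal (fun x y => a x * (z * w) y)]
    refine Finset.sum_congr rfl fun d hd => ?_
    have hd0 : d ≠ 0 := (Nat.pos_of_mem_divisors hd).ne'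
    rw [ha d hd0]
    congr 1
    rw [ArithmeticFunction.coe_zeta_mul_apply]
    refine Finset.sum_congr rfl fun e he => ?_
    rw [hw e (Nat.pos_of_mem_divisors he).ne']
  have hG : ∀ f : ℕ, 1 ≤ f → g f = (a * w) f := by
    intro f hf
    have e1 : m * (a * (z * w)) = a * w := by
      have : m * z = 1 := ArithmeticFunction.coe_moebius_mul_coe_zeta
      calc m * (a * (z * w)) = (m * z) * (a * w) := by ring
        _ = a * w := by rw [this, one_mul]
    rw [hg f hf, ← e1, ArithmeticFunction.mul_apply,
      Nat.sum_divisorsAntidiagonal (fun x y => m x * (a * (z * w)) y)]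
    refine Finset.sum_congr rfl fun d hd => ?_
    rw [hH _ (Nat.div_pos (Nat.divisor_le hd) (Nat.pos_of_mem_divisors hd))]
    simp [m]
  have hS : ∀ f : ℕ, 1 ≤ f → g f = ∑ d ∈ f.divisors, a d * w (f / d) := by
    intro f hf
    rw [hG f hf, ArithmeticFunction.mul_apply,
      Nat.sum_divisorsAntidiagonal (fun x y => a x * w y)]
  have hma : a.IsMultiplicative := by
    rw [ArithmeticFunction.IsMultiplicative.iff_ne_zero]
    refine ⟨by simp [ha 1 one_ne_zero, hχ1], ?_⟩
    intro x y hx hy hxy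
    rw [ha _ (mul_ne_zero hx hy), ha _ hx, ha _ hy,
      ArithmeticFunction.isMultiplicative_moebius.map_mul_of_coprime hxy,
      hχmul x y (Nat.pos_of_ne_zero hx) (Nat.pos_of_ne_zero hy)]
    push_cast
    ring
  have hmw : w.IsMultiplicative := by
    rw [ArithmeticFunction.IsMultiplicative.iff_ne_zero]
    refine ⟨by simp [hw 1 one_ne_zero], ?_⟩
    intro x y hx hy hxy
    rw [hw _ (mul_ne_zero hx hy), hw _ hx, hw _ hy]
    push_cast
    ring
  intro p hp f hf
  have hpf : 1 ≤ p * f := Nat.mul_pos hp.pos hf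
  refine ⟨fun hd => ?_, fun hd => ?_⟩
  · rw [hS _ hpf, hS _ hf, Finset.mul_sum]
    rw [← Finset.sum_subset (Nat.divisors_subset_of_dvd (Nat.pos_iff_ne_zero.mp hpf) (Dvd.intro_left p rfl))]
    · refine Finset.sum_congr rfl fun d hdd => ?_
      have h1 := Nat.dvd_of_mem_divisors hdd
      have h2 : f / d ≠ 0 :=
        (Nat.div_pos (Nat.divisor_le hdd) (Nat.pos_of_mem_divisors hdd)).ne'
      rw [Nat.mul_div_assoc _ h1, hw _ (mul_ne_zero hp.ne_zero h2), hw _ h2]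
      push_cast
      ring
    · intro d h1 h2
      have h3 := Nat.dvd_of_mem_divisors h1
      rw [ha d (Nat.pos_of_mem_divisors h1).ne',
        ArithmeticFunction.moebius_eq_zero_of_not_squarefree]
      · simp
      · intro hsq
        apply h2
        rw [Nat.mem_divisors]
        refine ⟨?_, by omega⟩
        by_cases hpd : p ∣ d
        · obtain ⟨c, rfl⟩ := hpd
          have hc : c ∣ f := Nat.dvd_of_mul_dvd_mul_left hp.pos h3
          exact (Nat.coprime_of_squarefree_mul hsq).mul_dvd_of_dvd_of_dvd hd hc
        · exact ((Nat.coprime_comm.mp ((Nat.Prime.coprime_iff_not_dvd hp).2 hpd))).dvd_of_dvd_mul_left h3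
  · rw [hG _ hpf, (hma.mul hmw).map_mul_of_coprime ((Nat.Prime.coprime_iff_not_dvd hp).2 hd),
      ← hG f hf, ← hG p hp.one_lt.le, hS p hp.one_lt.le, hp.sum_divisors]
    rw [Nat.div_self hp.pos, Nat.div_one, ha 1 one_ne_zero, ha p hp.ne_zero,
      hw 1 one_ne_zero, hw p hp.ne_zero, ArithmeticFunction.moebius_apply_prime hp]
    simp only [hχ1, ArithmeticFunction.moebius_apply_one, Nat.cast_one, one_pow, Int.cast_one, Int.cast_neg]
    ring
end

section
/- Let k ≥ 2 be an integer and let χ : ℤ_{>0} → ℂ be completely multiplicative (χ(1) = 1 and χ(ab) = χ(a)χ(b) for all a, b). For f ≥ 1 define h(f) := Σ_{d|f} μ(d)·χ(d)·d^{k−2}·σ_{2k−3}(f/d) and g(f) := Σ_{e|f} μ(e)·h(f/e), where μ is the Möbius function and σ_{2k−3}(t) = Σ_{d|t} d^{2k−3}. Then for every prime p, every integer j ≥ 1 and every f ≥ 1 with p ∤ f: g(p^j f) = ( p^{(2k−3)j} − χ(p)·p^{k−2+(2k−3)(j−1)} )·g(f). -/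
/-- iterated form of Statement 7: for a prime `p`, `j ≥ 1` and `f` with
`p ∤ f`, `g (p^j * f) = (p^((2k-3)j) - χ(p) p^(k-2+(2k-3)(j-1))) * g f`. -/
theorem statement8 (k : ℕ) (hk : 2 ≤ k) (χ : ℕ → ℂ)
    (hχ1 : χ 1 = 1)
    (hχmul : ∀ a b : ℕ, 0 < a → 0 < b → χ (a * b) = χ a * χ b)
    (h g : ℕ → ℂ)
    (hh : ∀ f : ℕ, 1 ≤ f → h f = ∑ d ∈ f.divisors,
      ((ArithmeticFunction.moebius d : ℤ) : ℂ) * χ d * (d : ℂ) ^ (k - 2)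
        * ∑ e ∈ (f / d).divisors, (e : ℂ) ^ (2 * k - 3))
    (hg : ∀ f : ℕ, 1 ≤ f → g f = ∑ e ∈ f.divisors,
      ((ArithmeticFunction.moebius e : ℤ) : ℂ) * h (f / e)) :
    ∀ p : ℕ, p.Prime → ∀ j : ℕ, 1 ≤ j → ∀ f : ℕ, 1 ≤ f → ¬ p ∣ f →
      g (p ^ j * f) =
        ((p : ℂ) ^ ((2 * k - 3) * j)
          - χ p * (p : ℂ) ^ (k - 2 + (2 * k - 3) * (j - 1))) * g f := by
  classical
  intro p hp j hj f hf hpf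
  have hn : 2 * k - 3 ≠ 0 := by omega
  let P : ArithmeticFunction ℂ := ⟨fun d => (d : ℂ) ^ (2 * k - 3), by simp [hn]⟩
  let A : ArithmeticFunction ℂ :=
    ⟨fun d => ((ArithmeticFunction.moebius d : ℤ) : ℂ) * χ d * (d : ℂ) ^ (k - 2), by simp⟩
  have hPa : ∀ d, P d = (d : ℂ) ^ (2 * k - 3) := fun d => rfl
  have hAa : ∀ d, A d = ((ArithmeticFunction.moebius d : ℤ) : ℂ) * χ d * (d : ℂ) ^ (k - 2) :=
    fun d => rfl
  have hP : P.IsMultiplicative := by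
    refine ⟨by simp [hPa], ?_⟩
    intro m n _
    simp [hPa, mul_pow]
  have hA : A.IsMultiplicative := by
    rw [ArithmeticFunction.IsMultiplicative.iff_ne_zero]
    refine ⟨by simp [hAa, hχ1], ?_⟩
    intro m n hm hn' hmn
    simp only [hAa]
    rw [ArithmeticFunction.isMultiplicative_moebius.map_mul_of_coprime hmn,
      hχmul m n (Nat.pos_of_ne_zero hm) (Nat.pos_of_ne_zero hn')]
    push_cast
    ring
  let H : ArithmeticFunction ℂ := A * ((ArithmeticFunction.zeta : ArithmeticFunction ℂ) * P)
  have hH : ∀ f : ℕ, 1 ≤ f → h f = H f := by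
    intro f hf
    rw [hh f hf]
    change _ = (A * _) f
    rw [ArithmeticFunction.mul_apply,
      Nat.sum_divisorsAntidiagonal
        (f := fun a b => A a * ((ArithmeticFunction.zeta : ArithmeticFunction ℂ) * P) b)]
    refine Finset.sum_congr rfl fun d _ => ?_
    simp only [ArithmeticFunction.coe_zeta_mul_apply, hAa, hPa]
  have hG : ∀ f : ℕ, 1 ≤ f → g f = (A * P) f := by
    intro f hf
    have e : A * P = ((ArithmeticFunction.moebius : ArithmeticFunction ℤ) :
        ArithmeticFunction ℂ) * H := by
      change _ = _ * (A * (_ * P))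
      rw [mul_left_comm, ← mul_assoc _ _ P, ArithmeticFunction.coe_moebius_mul_coe_zeta, one_mul]
    rw [hg f hf, e, ArithmeticFunction.mul_apply,
      Nat.sum_divisorsAntidiagonal
        (f := fun a b => ((ArithmeticFunction.moebius : ArithmeticFunction ℤ) :
          ArithmeticFunction ℂ) a * H b)]
    refine Finset.sum_congr rfl fun d hd => ?_
    rw [hH (f / d) (Nat.div_pos (Nat.divisor_le hd) (Nat.pos_of_mem_divisors hd))]
    simp
  have hcop : Nat.Coprime (p ^ j) f := Nat.Coprime.pow_left j ((hp.coprime_iff_not_dvd).2 hpf)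
  rw [hG _ (Nat.mul_pos (pow_pos hp.pos j) hf), hG f hf,
    (hA.mul hP).map_mul_of_coprime hcop]
  congr 1
  obtain ⟨i, rfl⟩ : ∃ i, j = i + 1 := ⟨j - 1, by omega⟩
  rw [ArithmeticFunction.mul_apply,
    Nat.sum_divisorsAntidiagonal (f := fun a b => A a * P b), Nat.sum_divisors_prime_pow hp,
    Finset.sum_range_succ', Finset.sum_range_succ']
  have hz : ∑ x ∈ Finset.range i, A (p ^ (x + 1 + 1)) * P (p ^ (i + 1) / p ^ (x + 1 + 1)) = 0 := by
    refine Finset.sum_eq_zero fun x _ => ?_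
    rw [hAa, ArithmeticFunction.moebius_apply_prime_pow hp (by omega)]
    simp
  rw [hz]
  have hd : p ^ (i + 1) / p = p ^ i := by
    rw [pow_succ, Nat.mul_div_cancel _ hp.pos]
  simp only [zero_add, pow_one, pow_zero, Nat.div_one, hd, hA.map_one, hPa, hAa,
    ArithmeticFunction.moebius_apply_prime hp, Nat.add_sub_cancel]
  push_cast
  rw [pow_add _ (k - 2), pow_mul, pow_mul, pow_right_comm, pow_right_comm _ (i + 1)]
  ring
end
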